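/- Every m-tuple (M₁,…,M_m) of normal complex matrices in End(V₁⊗⋯⊗Vₙ)^{⊕m} has a closed orbit under simultaneous conjugation by the local group GL_d = GL(V₁)×⋯×GL(Vₙ). -/

import Mathlib

open Matrix

/-- The Kronecker (tensor) product `g₁ ⊗ ⋯ ⊗ gₙ` of local matrices. -/
noncomputable def kron {n : ℕ} {d : Fin n → ℕ}
    (g : ∀ i, Matrix (Fin (d i)) (Fin (d i)) ℂ) :
    Matrix (∀ i, Fin (d i)) (∀ i, Fin (d i)) ℂ :=
  fun a b => ∏ i, g i (a i) (b i)

/-!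
Normal matrices minimise the Frobenius norm in their conjugation class: diagonalising `gᴴ g`, the
norm of `g M g⁻¹` becomes a sum of terms `‖M a b‖² (d a / d b)`, and since `M` has balanced rows
and columns, `x ≥ 1 + log x` shows that this is smallest for `d = 1`.

Orbits of vectors of minimal norm are closed (Kempf–Ness). For a self-adjoint `t`, the sequence
`‖ρ (t ^ n) v‖²` is convex, so near a self-adjoint `t₀` whose square moves `v` it grows at least
linearly in `n`, while if `t₀ ^ 2` fixes `v`, multiplying a high power of a nearby `t` by
`(t₀ ^ 2)⁻¹` makes it smaller without changing its value on `v`. By polar decomposition and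
compactness of the set of bounded self-adjoint units, every `g` with `ρ g v` bounded can therefore
be replaced by one from a fixed compact set.
-/

section UnitSize

open Filter Topology

/-- The size of a unit, controlling both the unit and its inverse; its sublevel sets are compact
when the algebra is finite-dimensional, which makes it an exhaustion of the group of units. -/
noncomputable def unitSize {B : Type*} [NormedRing B] (g : Bˣ) : ℝ :=
  max ‖(g : B)‖ ‖((g⁻¹ : Bˣ) : B)‖

section NormedRing

variable {B : Type*} [NormedRing B]

lemma unitSize_nonneg (g : Bˣ) : 0 ≤ unitSize g :=
  le_max_of_le_left (norm_nonneg _)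

lemma unitSize_mul_le (g h : Bˣ) : unitSize (g * h) ≤ unitSize g * unitSize h := by
  refine max_le ?_ ?_
  · rw [Units.val_mul]
    exact (norm_mul_le _ _).trans
      (mul_le_mul (le_max_left _ _) (le_max_left _ _) (norm_nonneg _) (unitSize_nonneg g))
  · rw [_root_.mul_inv_rev, Units.val_mul, mul_comm (unitSize g)]
    exact (norm_mul_le _ _).trans
      (mul_le_mul (le_max_right _ _) (le_max_right _ _) (norm_nonneg _) (unitSize_nonneg h))

lemma continuous_unitSize : Continuous (unitSize : Bˣ → ℝ) :=
  Units.continuous_val.norm.max Units.continuous_coe_inv.norm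

lemma isCompact_setOf_unitSize_le [ProperSpace B] (C : ℝ) :
    IsCompact {g : Bˣ | unitSize g ≤ C} := by
  have hball := isCompact_closedBall (0 : B) C
  have hpre := Units.isClosedEmbedding_embedProduct.isCompact_preimage
    (hball.prod (hball.image MulOpposite.continuous_op))
  convert hpre using 1
  ext g
  simp [unitSize, Units.embedProduct]

end NormedRing

section CStarRing

variable {B : Type*} [NormedRing B] [StarRing B] [CStarRing B]

lemma norm_pow_of_isSelfAdjoint {a : B} (ha : IsSelfAdjoint a) {n : ℕ} (hn : n ≠ 0) :
    ‖a ^ n‖ = ‖a‖ ^ n := by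
  refine le_antisymm (norm_pow_le' a hn.bot_lt) ?_
  rcases (norm_nonneg a).eq_or_lt with h0 | hpos
  · rw [← h0, zero_pow hn]
    exact norm_nonneg _
  have hlt : n < 2 ^ n := Nat.lt_two_pow_self
  have hsplit : ‖a‖ ^ n * ‖a‖ ^ (2 ^ n - n) ≤ ‖a ^ n‖ * ‖a‖ ^ (2 ^ n - n) :=
    calc ‖a‖ ^ n * ‖a‖ ^ (2 ^ n - n) = ‖a ^ 2 ^ n‖ := by
          rw [← pow_add, Nat.add_sub_cancel' hlt.le]
          exact (ha.norm_pow_two_pow n).symm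
      _ = ‖a ^ n * a ^ (2 ^ n - n)‖ := by rw [← pow_add, Nat.add_sub_cancel' hlt.le]
      _ ≤ ‖a ^ n‖ * ‖a‖ ^ (2 ^ n - n) := (norm_mul_le _ _).trans
          (mul_le_mul_of_nonneg_left (norm_pow_le' a (Nat.sub_pos_of_lt hlt)) (norm_nonneg _))
  exact le_of_mul_le_mul_right hsplit (pow_pos hpos _)

lemma unitSize_one_le : unitSize (1 : Bˣ) ≤ 1 := by
  rcases subsingleton_or_nontrivial B with _ | _
  · simp [unitSize, Subsingleton.elim (1 : B) 0]
  · simp [unitSize]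

lemma unitSize_pow {t : Bˣ} (ht : IsSelfAdjoint t) {n : ℕ} (hn : n ≠ 0) :
    unitSize (t ^ n) = unitSize t ^ n := by
  have hval : IsSelfAdjoint (t : B) := congrArg Units.val ht
  have hinv : IsSelfAdjoint ((t⁻¹ : Bˣ) : B) := congrArg Units.val (ht.inv)
  rw [unitSize, unitSize, ← inv_pow, Units.val_pow_eq_pow_val, Units.val_pow_eq_pow_val,
    norm_pow_of_isSelfAdjoint hval hn, norm_pow_of_isSelfAdjoint hinv hn]
  exact ((pow_left_monotoneOn (n := n)).map_max (norm_nonneg _) (norm_nonneg _)).symm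

lemma unitSize_sq_eq (g : Bˣ) : unitSize g ^ 2 = unitSize (star g * g) := by
  rw [unitSize, unitSize, _root_.mul_inv_rev, ← star_inv, Units.val_mul, Units.val_mul,
    Units.coe_star, Units.coe_star, CStarRing.norm_star_mul_self, CStarRing.norm_self_mul_star,
    ← sq, ← sq]
  exact (pow_left_monotoneOn (n := 2)).map_max (norm_nonneg _) (norm_nonneg _)

lemma unitSize_mul_eq_of_star_mul_self_eq {g h : Bˣ} (hgh : star g * g = star h * h) (s : Bˣ) :
    unitSize (g * s) = unitSize (h * s) := by
  refine (sq_eq_sq₀ (unitSize_nonneg _) (unitSize_nonneg _)).mp ?_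
  rw [unitSize_sq_eq, unitSize_sq_eq, star_mul, star_mul, mul_assoc, mul_assoc,
    ← mul_assoc (star g), ← mul_assoc (star h), hgh]

lemma unitSize_eq_of_star_mul_self_eq {g h : Bˣ} (hgh : star g * g = star h * h) :
    unitSize g = unitSize h := by
  simpa using unitSize_mul_eq_of_star_mul_self_eq hgh 1

lemma eventually_unitSize_pow_mul_le (t₀ : Bˣ) :
    ∀ᶠ t : Bˣ in 𝓝 t₀, IsSelfAdjoint t → 2 ≤ unitSize t ^ 2 → ∀ n ≠ 0,
      unitSize (t ^ (2 * n) * (t₀ ^ 2)⁻¹) ≤ 3 / 4 * unitSize (t ^ (2 * n)) := by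
  have hlim : Tendsto (fun t : Bˣ ↦ unitSize (t ^ 2 * (t₀ ^ 2)⁻¹)) (𝓝 t₀)
      (𝓝 (unitSize (1 : Bˣ))) := by
    have hcont : Continuous fun t : Bˣ ↦ unitSize (t ^ 2 * (t₀ ^ 2)⁻¹) :=
      continuous_unitSize.comp ((continuous_pow 2).mul continuous_const)
    simpa using hcont.tendsto t₀
  have hlt : unitSize (1 : Bˣ) < 3 / 2 := unitSize_one_le.trans_lt (by norm_num)
  filter_upwards [hlim.eventually_lt_const hlt] with t hnear ht hlarge n hn
  obtain ⟨m, rfl⟩ := Nat.exists_eq_succ_of_ne_zero hn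
  have hpow : unitSize (t ^ (2 * m)) * unitSize t ^ 2 ≤ unitSize (t ^ (2 * (m + 1))) := by
    rw [unitSize_pow ht (n := 2 * (m + 1)) (by lia), mul_add, pow_add]
    rcases Nat.eq_zero_or_pos m with rfl | hm
    · simpa using mul_le_mul_of_nonneg_right (unitSize_one_le (B := B)) (sq_nonneg (unitSize t))
    · rw [unitSize_pow ht (n := 2 * m) (by lia)]
  calc unitSize (t ^ (2 * (m + 1)) * (t₀ ^ 2)⁻¹)
      = unitSize (t ^ (2 * m) * (t ^ 2 * (t₀ ^ 2)⁻¹)) := by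
        rw [← mul_assoc, ← pow_add]
        rfl
    _ ≤ unitSize (t ^ (2 * m)) * (3 / 2) := (unitSize_mul_le _ _).trans
        (mul_le_mul_of_nonneg_left hnear.le (unitSize_nonneg _))
    _ ≤ 3 / 4 * (unitSize (t ^ (2 * m)) * unitSize t ^ 2) := by
        nlinarith [unitSize_nonneg (t ^ (2 * m))]
    _ ≤ 3 / 4 * unitSize (t ^ (2 * (m + 1))) := by gcongr

end CStarRing

section CStarAlgebra

variable {B : Type*} [CStarAlgebra B]

lemma exists_isSelfAdjoint_pow_eq_star_mul_self (g : Bˣ) {n : ℕ} (hn : n ≠ 0) :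
    ∃ t : Bˣ, IsSelfAdjoint t ∧ t ^ n = star g * g := by
  set a : B := star (g : B) * g
  have ha : IsSelfAdjoint a := .star_mul_self _
  set root : B := cfc (fun x : ℝ ↦ x ^ (n⁻¹ : ℝ)) a
  have hroot : root ^ n = a := by
    rw [← cfc_pow (fun x : ℝ ↦ x ^ (n⁻¹ : ℝ)) n a
      (Real.continuous_rpow_const (by positivity)).continuousOn]
    conv_rhs => rw [← cfc_id ℝ a]
    exact cfc_congr fun x hx ↦ Real.rpow_inv_natCast_pow (spectrum_star_mul_self_nonneg x hx) hn
  have hunit : IsUnit root := (isUnit_pow_iff hn).mp (hroot ▸ (star g * g).isUnit)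
  refine ⟨hunit.unit, Units.ext ?_, Units.ext ?_⟩
  · exact (cfc_predicate _ a : IsSelfAdjoint root)
  · simpa using hroot

lemma exists_isSelfAdjoint_star_pow_mul_pow_eq (g : Bˣ) (hg : 2 ≤ unitSize g) :
    ∃ (t : Bˣ) (n : ℕ), n ≠ 0 ∧ IsSelfAdjoint t ∧ 2 ≤ unitSize t ^ 2 ∧ unitSize t ≤ 2 ∧
      star (t ^ (2 * n)) * t ^ (2 * n) = star g * g := by
  obtain ⟨n, hlo, hhi⟩ := exists_nat_pow_near (one_le_two.trans hg) one_lt_two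
  have hn : n ≠ 0 := by
    rintro rfl
    norm_num at hhi
    linarith
  obtain ⟨t, ht, htg⟩ := exists_isSelfAdjoint_pow_eq_star_mul_self g (n := 4 * n) (by lia)
  have hstar : star (t ^ (2 * n)) * t ^ (2 * n) = star g * g := by
    rw [(ht.pow _).star_eq, ← pow_add, ← htg]
    congr 1
    ring
  have hsize : unitSize g = (unitSize t ^ 2) ^ n := by
    rw [← pow_mul, ← unitSize_pow ht (by lia)]
    exact (unitSize_eq_of_star_mul_self_eq hstar).symm
  have hlt : (unitSize t ^ 2) ^ n < 4 ^ n :=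
    calc (unitSize t ^ 2) ^ n < 2 ^ (n + 1) := hsize ▸ hhi
      _ ≤ 2 ^ (2 * n) := pow_le_pow_right₀ one_le_two (by lia)
      _ = 4 ^ n := by rw [pow_mul]; norm_num
  have hlt_four : unitSize t ^ 2 < 4 := lt_of_pow_lt_pow_left₀ n (by norm_num) hlt
  refine ⟨t, n, hn, ht, ?_, ?_, hstar⟩
  · exact le_of_pow_le_pow_left₀ hn (by positivity) (hsize ▸ hlo)
  · nlinarith

end CStarAlgebra

end UnitSize

section SymmetricMap

variable {𝕜 E : Type*} [RCLike 𝕜] [NormedAddCommGroup E] [InnerProductSpace 𝕜 E]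
  {T : E →ₗ[𝕜] E}

lemma two_mul_norm_sq_apply_le (hT : T.IsSymmetric) (v : E) :
    2 * ‖T v‖ ^ 2 ≤ ‖v‖ ^ 2 + ‖T (T v)‖ ^ 2 := by
  have hcs : ‖T v‖ ^ 2 ≤ ‖v‖ * ‖T (T v)‖ := by
    rw [← inner_self_eq_norm_sq (𝕜 := 𝕜), hT v (T v)]
    exact re_inner_le_norm _ _
  nlinarith [sq_nonneg (‖v‖ - ‖T (T v)‖)]

lemma natCast_mul_norm_sq_sub_le (hT : T.IsSymmetric) (n : ℕ) (v : E) :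
    n * (‖T v‖ ^ 2 - ‖v‖ ^ 2) ≤ ‖(T ^ n) v‖ ^ 2 - ‖v‖ ^ 2 := by
  induction n generalizing v with
  | zero => simp
  | succ n ih =>
    have hconvex : n * (‖T v‖ ^ 2 - ‖v‖ ^ 2) ≤ n * (‖T (T v)‖ ^ 2 - ‖T v‖ ^ 2) :=
      mul_le_mul_of_nonneg_left (by linarith [two_mul_norm_sq_apply_le hT v]) n.cast_nonneg
    rw [pow_succ T n, Module.End.mul_apply]
    push_cast
    linarith [ih (T v)]

lemma apply_apply_eq_self_of_norm_le (hT : T.IsSymmetric) {v : E} (hv : ‖v‖ ≤ ‖T v‖)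
    (hTv : ‖T (T v)‖ ≤ ‖v‖) : T (T v) = v := by
  have hinner : RCLike.re (inner 𝕜 (T (T v)) v) = ‖T v‖ ^ 2 := by
    rw [hT (T v) v, inner_self_eq_norm_sq]
  have hzero : ‖T (T v) - v‖ ^ 2 ≤ 0 := by
    rw [@norm_sub_sq 𝕜, hinner]
    nlinarith [norm_nonneg v, norm_nonneg (T (T v))]
  exact sub_eq_zero.mp (norm_eq_zero.mp (pow_eq_zero_iff two_ne_zero |>.mp
    (le_antisymm hzero (sq_nonneg _))))

end SymmetricMap

section Compact

open Filter Topology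

lemma exists_forall_mem_of_isCompact {X α : Type*} [TopologicalSpace X] [Preorder α]
    [IsDirectedOrder α] [Nonempty α] {K : Set X} (hK : IsCompact K) {P : α → X → Prop}
    (hmono : ∀ a b, a ≤ b → ∀ x, P a x → P b x)
    (hlocal : ∀ x ∈ K, ∃ a, ∀ᶠ y in 𝓝[K] x, P a y) : ∃ a, ∀ x ∈ K, P a x := by
  refine hK.induction_on (p := fun S ↦ ∃ a, ∀ x ∈ S, P a x) (by simp) ?_ ?_ ?_
  · rintro S T hST ⟨a, ha⟩
    exact ⟨a, fun x hx ↦ ha x (hST hx)⟩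
  · rintro S T ⟨a, ha⟩ ⟨b, hb⟩
    obtain ⟨c, hac, hbc⟩ := exists_ge_ge a b
    exact ⟨c, fun x hx ↦ hx.elim (fun hS ↦ hmono a c hac x (ha x hS))
      fun hT ↦ hmono b c hbc x (hb x hT)⟩
  · intro x hx
    obtain ⟨a, ha⟩ := hlocal x hx
    exact ⟨_, ha, a, fun y hy ↦ hy⟩

end Compact

section KempfNess

open Filter Topology

variable {B 𝕜 E : Type*} [RCLike 𝕜] [NormedAddCommGroup E] [InnerProductSpace 𝕜 E]

/-- A representation of the unit group of a star monoid on an inner product space in which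
`ρ (star g)` is the adjoint of `ρ g`. -/
def IsStarRepresentation [Monoid B] [StarMul B] (ρ : Representation 𝕜 Bˣ E) : Prop :=
  ∀ g v w, inner 𝕜 (ρ g v) w = inner 𝕜 v (ρ (star g) w)

/-- The unit `g` can be replaced by a substantially smaller one with the same value `ρ g v`, by
multiplying it with a stabilizer element of `v`. -/
def CanShrink [NormedRing B] (ρ : Representation 𝕜 Bˣ E) (v : E) (g : Bˣ) : Prop :=
  ∃ s, ρ s v = v ∧ unitSize (g * s) ≤ 3 / 4 * unitSize g

lemma isClosed_setOf_isSelfAdjoint_units [Monoid B] [StarMul B] [TopologicalSpace B]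
    [ContinuousStar B] [T2Space B] : IsClosed {t : Bˣ | IsSelfAdjoint t} := by
  have heq : {t : Bˣ | IsSelfAdjoint t} = {t : Bˣ | star (t : B) = t} :=
    Set.ext fun t ↦ Units.ext_iff
  rw [heq]
  exact isClosed_eq Units.continuous_val.star Units.continuous_val

section StarMul

variable [Monoid B] [StarMul B] {ρ : Representation 𝕜 Bˣ E}

lemma IsStarRepresentation.isSymmetric (hρ : IsStarRepresentation ρ) {t : Bˣ}
    (ht : IsSelfAdjoint t) : (ρ t).IsSymmetric := fun v w ↦ by
  rw [hρ, ht.star_eq]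

lemma IsStarRepresentation.norm_apply_eq_of_star_mul_self_eq (hρ : IsStarRepresentation ρ)
    {g h : Bˣ} (hgh : star g * g = star h * h) (v : E) : ‖ρ g v‖ = ‖ρ h v‖ := by
  have hsq (k : Bˣ) : ‖ρ k v‖ ^ 2 = RCLike.re (inner 𝕜 v (ρ (star k * k) v)) := by
    rw [← inner_self_eq_norm_sq (𝕜 := 𝕜), hρ, map_mul, Module.End.mul_apply]
  refine (sq_eq_sq₀ (norm_nonneg _) (norm_nonneg _)).mp ?_
  rw [hsq, hsq, hgh]

lemma IsStarRepresentation.apply_sq_eq_self (hρ : IsStarRepresentation ρ) {v : E}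
    (hmin : ∀ g, ‖v‖ ≤ ‖ρ g v‖) {t : Bˣ} (ht : IsSelfAdjoint t) (hle : ‖ρ (t ^ 2) v‖ ≤ ‖v‖) :
    ρ (t ^ 2) v = v := by
  rw [sq, map_mul] at hle ⊢
  exact apply_apply_eq_self_of_norm_le (hρ.isSymmetric ht) (hmin t) hle

lemma IsStarRepresentation.eventually_natCast_mul_le_norm_sq [TopologicalSpace B]
    [ContinuousMul B] (hρ : IsStarRepresentation ρ) {v : E} (hcont : Continuous fun g ↦ ρ g v)
    {t₀ : Bˣ} {ε : ℝ} (hε : ε < ‖ρ (t₀ ^ 2) v‖ ^ 2 - ‖v‖ ^ 2) :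
    ∀ᶠ t in 𝓝 t₀, IsSelfAdjoint t → ∀ n : ℕ, n * ε ≤ ‖ρ (t ^ (2 * n)) v‖ ^ 2 := by
  have hgap : Continuous fun t ↦ ‖ρ (t ^ 2) v‖ ^ 2 - ‖v‖ ^ 2 :=
    ((hcont.comp (continuous_pow 2)).norm.pow 2).sub continuous_const
  filter_upwards [(hgap.tendsto t₀).eventually_const_lt hε] with t htε ht n
  calc n * ε ≤ n * (‖ρ (t ^ 2) v‖ ^ 2 - ‖v‖ ^ 2) := by gcongr
    _ ≤ ‖(ρ (t ^ 2) ^ n) v‖ ^ 2 - ‖v‖ ^ 2 :=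
      natCast_mul_norm_sq_sub_le (hρ.isSymmetric (ht.pow 2)) n v
    _ ≤ ‖ρ (t ^ (2 * n)) v‖ ^ 2 := by
      rw [← map_pow, ← pow_mul]
      exact sub_le_self _ (sq_nonneg _)

end StarMul

section CStarRing

variable [NormedRing B] [StarRing B] [CStarRing B] {ρ : Representation 𝕜 Bˣ E}

lemma CanShrink.of_star_mul_self_eq {v : E} {g h : Bˣ} (hg : CanShrink ρ v g)
    (hgh : star g * g = star h * h) : CanShrink ρ v h := by
  obtain ⟨s, hs, hshrink⟩ := hg
  rw [unitSize_mul_eq_of_star_mul_self_eq hgh, unitSize_eq_of_star_mul_self_eq hgh] at hshrink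
  exact ⟨s, hs, hshrink⟩

lemma IsStarRepresentation.exists_eventually_unitSize_pow_le (hρ : IsStarRepresentation ρ) {v : E}
    (hcont : Continuous fun g ↦ ρ g v) {t₀ : Bˣ} (ht₀ : ‖v‖ < ‖ρ (t₀ ^ 2) v‖) (R : ℝ) :
    ∃ C : ℝ, ∀ᶠ t in 𝓝 t₀, IsSelfAdjoint t → unitSize t ≤ 2 → ∀ n ≠ 0,
      ‖ρ (t ^ (2 * n)) v‖ ≤ R → unitSize (t ^ (2 * n)) ≤ C := by
  have hgap : 0 < ‖ρ (t₀ ^ 2) v‖ ^ 2 - ‖v‖ ^ 2 :=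
    sub_pos.mpr (pow_lt_pow_left₀ ht₀ (norm_nonneg v) two_ne_zero)
  obtain ⟨ε, hε, hεgap⟩ := exists_between hgap
  refine ⟨2 ^ (2 * ⌈R ^ 2 / ε⌉₊), ?_⟩
  filter_upwards [hρ.eventually_natCast_mul_le_norm_sq hcont hεgap] with t hgrow ht hsize n hn hR
  have hnR : (n : ℝ) ≤ R ^ 2 / ε :=
    (le_div_iff₀ hε).mpr ((hgrow ht n).trans (pow_le_pow_left₀ (norm_nonneg _) hR 2))
  have hn_le : n ≤ ⌈R ^ 2 / ε⌉₊ := by exact_mod_cast hnR.trans (Nat.le_ceil _)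
  calc unitSize (t ^ (2 * n)) = unitSize t ^ (2 * n) := unitSize_pow ht (by lia)
    _ ≤ 2 ^ (2 * n) := pow_le_pow_left₀ (unitSize_nonneg t) hsize _
    _ ≤ 2 ^ (2 * ⌈R ^ 2 / ε⌉₊) := pow_le_pow_right₀ one_le_two (by lia)

lemma IsStarRepresentation.exists_eventually_canShrink_pow
    (hρ : IsStarRepresentation ρ) {v : E} (hcont : Continuous fun g ↦ ρ g v)
    (hmin : ∀ g, ‖v‖ ≤ ‖ρ g v‖) (R : ℝ) {t₀ : Bˣ} (ht₀ : IsSelfAdjoint t₀) :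
    ∃ C : ℝ, ∀ᶠ t in 𝓝 t₀, IsSelfAdjoint t → 2 ≤ unitSize t ^ 2 → unitSize t ≤ 2 → ∀ n ≠ 0,
      ‖ρ (t ^ (2 * n)) v‖ ≤ R → C < unitSize (t ^ (2 * n)) → CanShrink ρ v (t ^ (2 * n)) := by
  rcases lt_or_ge ‖v‖ ‖ρ (t₀ ^ 2) v‖ with hgrow | hle
  · obtain ⟨C, hC⟩ := hρ.exists_eventually_unitSize_pow_le hcont hgrow R
    refine ⟨C, hC.mono fun t hbound ht _ hsize n hn hR hlarge ↦ ?_⟩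
    exact absurd (hbound ht hsize n hn hR) hlarge.not_ge
  · have hfix : ρ (t₀ ^ 2)⁻¹ v = v := by
      conv_lhs => rw [← hρ.apply_sq_eq_self hmin ht₀ hle]
      exact ρ.inv_self_apply _ v
    exact ⟨0, (eventually_unitSize_pow_mul_le t₀).mono fun t hshrink ht hlow _ n hn _ _ ↦
      ⟨_, hfix, hshrink ht hlow n hn⟩⟩

end CStarRing

section CStarAlgebra

variable [CStarAlgebra B] [FiniteDimensional ℂ B] {ρ : Representation 𝕜 Bˣ E}

lemma IsStarRepresentation.exists_canShrink_pow (hρ : IsStarRepresentation ρ) {v : E}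
    (hcont : Continuous fun g ↦ ρ g v) (hmin : ∀ g, ‖v‖ ≤ ‖ρ g v‖) (R : ℝ) :
    ∃ C : ℝ, ∀ t, IsSelfAdjoint t → 2 ≤ unitSize t ^ 2 → unitSize t ≤ 2 → ∀ n ≠ 0,
      ‖ρ (t ^ (2 * n)) v‖ ≤ R → C < unitSize (t ^ (2 * n)) → CanShrink ρ v (t ^ (2 * n)) := by
  have hcompact : IsCompact ({t : Bˣ | unitSize t ≤ 2} ∩ {t | IsSelfAdjoint t}) :=
    (isCompact_setOf_unitSize_le 2).inter_right isClosed_setOf_isSelfAdjoint_units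
  obtain ⟨C, hC⟩ := exists_forall_mem_of_isCompact hcompact
    (P := fun C t ↦ 2 ≤ unitSize t ^ 2 → unitSize t ≤ 2 → ∀ n ≠ 0,
      ‖ρ (t ^ (2 * n)) v‖ ≤ R → C < unitSize (t ^ (2 * n)) → CanShrink ρ v (t ^ (2 * n)))
    (fun C C' hCC' t h hlow hsize n hn hR hlarge ↦ h hlow hsize n hn hR (hCC'.trans_lt hlarge))
    fun t₀ ht₀ ↦ by
      obtain ⟨C, hC⟩ := hρ.exists_eventually_canShrink_pow hcont hmin R ht₀.2
      refine ⟨C, ?_⟩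
      filter_upwards [nhdsWithin_le_nhds hC, self_mem_nhdsWithin] with t h ht using h ht.2
  exact ⟨C, fun t ht hlow hsize ↦ hC t ⟨hsize, ht⟩ hlow hsize⟩

theorem IsStarRepresentation.exists_apply_eq_unitSize_le_sub_one (hρ : IsStarRepresentation ρ)
    {v : E} (hcont : Continuous fun g ↦ ρ g v) (hmin : ∀ g, ‖v‖ ≤ ‖ρ g v‖) (R : ℝ) :
    ∃ C : ℝ, ∀ g, ‖ρ g v‖ ≤ R → C < unitSize g →
      ∃ h, ρ h v = ρ g v ∧ unitSize h ≤ unitSize g - 1 := by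
  obtain ⟨C, hC⟩ := hρ.exists_canShrink_pow hcont hmin R
  refine ⟨max C 4, fun g hg hlarge ↦ ?_⟩
  obtain ⟨hCg, hfour⟩ := max_lt_iff.mp hlarge
  obtain ⟨t, n, hn, ht, hlow, hhigh, hpolar⟩ :=
    exists_isSelfAdjoint_star_pow_mul_pow_eq g (by linarith)
  have hsize : unitSize (t ^ (2 * n)) = unitSize g := unitSize_eq_of_star_mul_self_eq hpolar
  have hnorm : ‖ρ (t ^ (2 * n)) v‖ ≤ R :=
    (hρ.norm_apply_eq_of_star_mul_self_eq hpolar v).trans_le hg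
  obtain ⟨s, hs, hshrink⟩ : CanShrink ρ v g :=
    (hC t ht hlow hhigh n hn hnorm (hsize ▸ hCg)).of_star_mul_self_eq hpolar
  refine ⟨g * s, by rw [map_mul, Module.End.mul_apply, hs], ?_⟩
  linarith

theorem IsStarRepresentation.exists_apply_eq_unitSize_le (hρ : IsStarRepresentation ρ)
    {v : E} (hcont : Continuous fun g ↦ ρ g v) (hmin : ∀ g, ‖v‖ ≤ ‖ρ g v‖) (R : ℝ) :
    ∃ C : ℝ, ∀ g, ‖ρ g v‖ ≤ R → ∃ h, ρ h v = ρ g v ∧ unitSize h ≤ C := by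
  obtain ⟨C, hC⟩ := hρ.exists_apply_eq_unitSize_le_sub_one hcont hmin R
  refine ⟨C, fun g hg ↦ ?_⟩
  obtain ⟨n, hn⟩ := exists_nat_ge (unitSize g - C)
  induction n generalizing g with
  | zero => exact ⟨g, rfl, by simpa using hn⟩
  | succ n ih =>
    rcases le_or_gt (unitSize g) C with hle | hlarge
    · exact ⟨g, rfl, hle⟩
    obtain ⟨h, hhg, hsmaller⟩ := hC g hg hlarge
    push_cast at hn
    obtain ⟨k, hkh, hk⟩ := ih h (hhg ▸ hg) (by linarith)
    exact ⟨k, hkh.trans hhg, hk⟩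

theorem IsStarRepresentation.isClosed_orbit (hρ : IsStarRepresentation ρ)
    {v : E} (hcont : Continuous fun g ↦ ρ g v) (hmin : ∀ g, ‖v‖ ≤ ‖ρ g v‖) :
    IsClosed (Set.range fun g ↦ ρ g v) := by
  refine closure_subset_iff_isClosed.mp fun x hx ↦ ?_
  obtain ⟨C, hC⟩ := hρ.exists_apply_eq_unitSize_le hcont hmin (‖x‖ + 1)
  have hcompact : IsCompact ((fun g ↦ ρ g v) '' {g | unitSize g ≤ C}) :=
    (isCompact_setOf_unitSize_le C).image hcont
  have hbounded : {y | ‖y‖ < ‖x‖ + 1} ∩ Set.range (fun g ↦ ρ g v) ⊆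
      (fun g ↦ ρ g v) '' {g | unitSize g ≤ C} := by
    rintro _ ⟨hlt, g, rfl⟩
    obtain ⟨h, hhg, hsize⟩ := hC g hlt.le
    exact ⟨h, hsize, hhg⟩
  have hopen : IsOpen {y : E | ‖y‖ < ‖x‖ + 1} := isOpen_lt continuous_norm continuous_const
  have hx_closure := hopen.inter_closure ⟨by simp, hx⟩
  obtain ⟨g, -, hgx⟩ := hcompact.isClosed.closure_subset_iff.mpr hbounded hx_closure
  exact ⟨g, hgx⟩

end CStarAlgebra

end KempfNess

section NormalMatrix

lemma sum_sum_le_sum_sum_mul_div {N : Type*} [Fintype N] {w : N → N → ℝ} (hw : ∀ a b, 0 ≤ w a b)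
    (hbal : ∀ a, ∑ b, w a b = ∑ b, w b a) {d : N → ℝ} (hd : ∀ a, 0 < d a) :
    ∑ a, ∑ b, w a b ≤ ∑ a, ∑ b, w a b * (d a / d b) := by
  have hlog (a b : N) : 1 + (Real.log (d a) - Real.log (d b)) ≤ d a / d b := by
    rw [← Real.log_div (hd a).ne' (hd b).ne']
    linarith [Real.log_le_sub_one_of_pos (div_pos (hd a) (hd b))]
  have hcancel : ∑ a, ∑ b, w a b * (Real.log (d a) - Real.log (d b)) = 0 := by
    simp only [mul_sub, Finset.sum_sub_distrib]
    rw [Finset.sum_comm (f := fun a b ↦ w a b * Real.log (d b))]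
    simp only [← Finset.sum_mul, hbal, sub_self]
  calc ∑ a, ∑ b, w a b = ∑ a, ∑ b, w a b * (1 + (Real.log (d a) - Real.log (d b))) := by
        simp only [mul_add, mul_one, Finset.sum_add_distrib, hcancel, add_zero]
    _ ≤ ∑ a, ∑ b, w a b * (d a / d b) := by
        gcongr with a _ b _
        · exact hw a b
        · exact hlog a b

variable {N : Type*} [Fintype N]

lemma sum_norm_sq_row_eq_col {M : Matrix N N ℂ} (hM : IsStarNormal M) (a : N) :
    ∑ b, ‖M a b‖ ^ 2 = ∑ b, ‖M b a‖ ^ 2 := by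
  have hdiag := congrFun₂ hM.star_comm_self.eq a a
  simp only [star_eq_conjTranspose, Matrix.mul_apply, conjTranspose_apply, Complex.star_def,
    Complex.mul_conj', Complex.conj_mul'] at hdiag
  exact_mod_cast hdiag.symm

variable [DecidableEq N]

lemma trace_diagonal_inv_mul_conjTranspose_mul_diagonal_mul (d : N → ℝ) (M : Matrix N N ℂ) :
    (diagonal (fun a ↦ (d a : ℂ)⁻¹) * Mᴴ * diagonal (fun a ↦ (d a : ℂ)) * M).trace =
      ((∑ a, ∑ b, ‖M a b‖ ^ 2 * (d a / d b) : ℝ) : ℂ) := by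
  simp only [trace, diag_apply, Matrix.mul_apply (N := M), mul_diagonal, diagonal_mul,
    conjTranspose_apply]
  rw [Finset.sum_comm]
  push_cast
  refine Finset.sum_congr rfl fun a _ ↦ Finset.sum_congr rfl fun b _ ↦ ?_
  rw [← Complex.conj_mul', Complex.star_def]
  ring

lemma trace_conjTranspose_mul_self_le_diagonal {M : Matrix N N ℂ} (hM : IsStarNormal M)
    {d : N → ℝ} (hd : ∀ a, 0 < d a) :
    (Mᴴ * M).trace.re ≤
      (diagonal (fun a ↦ (d a : ℂ)⁻¹) * Mᴴ * diagonal (fun a ↦ (d a : ℂ)) * M).trace.re := by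
  have hsum : (Mᴴ * M).trace = ((∑ a, ∑ b, ‖M a b‖ ^ 2 : ℝ) : ℂ) := by
    simpa using trace_diagonal_inv_mul_conjTranspose_mul_diagonal_mul (fun _ ↦ 1) M
  rw [hsum, trace_diagonal_inv_mul_conjTranspose_mul_diagonal_mul, Complex.ofReal_re,
    Complex.ofReal_re]
  exact sum_sum_le_sum_sum_mul_div (fun a b ↦ sq_nonneg ‖M a b‖) (sum_norm_sq_row_eq_col hM) hd

lemma trace_conjTranspose_mul_self_le_conj_of_diagonal {M : Matrix N N ℂ} (hM : IsStarNormal M)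
    {g : (Matrix N N ℂ)ˣ} {d : N → ℝ} (hd : ∀ a, 0 < d a)
    (hg : g.valᴴ * g.val = diagonal (fun a ↦ (d a : ℂ))) :
    (Mᴴ * M).trace.re ≤ ((g.val * M * g⁻¹.val)ᴴ * (g.val * M * g⁻¹.val)).trace.re := by
  have hg_inv : g⁻¹.val * g⁻¹.valᴴ = diagonal (fun a ↦ (d a : ℂ)⁻¹) := by
    refine left_inv_eq_right_inv (a := g.valᴴ * g.val) ?_ ?_
    · rw [mul_assoc, ← mul_assoc _ g.valᴴ, ← conjTranspose_mul, g.mul_inv, conjTranspose_one,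
        one_mul, g.inv_mul]
    · rw [hg, diagonal_mul_diagonal, ← diagonal_one]
      exact congrArg diagonal (funext fun a ↦ mul_inv_cancel₀ (by exact_mod_cast (hd a).ne'))
  calc (Mᴴ * M).trace.re
      ≤ (g⁻¹.val * g⁻¹.valᴴ * Mᴴ * (g.valᴴ * g.val) * M).trace.re := by
        rw [hg, hg_inv]
        exact trace_conjTranspose_mul_self_le_diagonal hM hd
    _ = ((g.val * M * g⁻¹.val)ᴴ * (g.val * M * g⁻¹.val)).trace.re := by
        rw [← mul_assoc (_ᴴ) (g.val * M), trace_mul_comm _ g⁻¹.val]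
        simp only [conjTranspose_mul, mul_assoc]

open scoped ComplexOrder in
theorem trace_conjTranspose_mul_self_le_conj {M : Matrix N N ℂ} (hM : IsStarNormal M)
    (g : (Matrix N N ℂ)ˣ) :
    (Mᴴ * M).trace.re ≤ ((g.val * M * g⁻¹.val)ᴴ * (g.val * M * g⁻¹.val)).trace.re := by
  have hpos : (g.valᴴ * g.val).PosDef :=
    .conjTranspose_mul_self _ (Matrix.mulVec_injective_of_isUnit g.isUnit)
  let U := hpos.isHermitian.eigenvectorUnitary
  let u := Unitary.toUnits U
  have hdiag : (g * u).valᴴ * (g * u).val =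
      diagonal (fun a ↦ (hpos.isHermitian.eigenvalues a : ℂ)) := by
    refine .trans ?_ hpos.isHermitian.conjStarAlgAut_star_eigenvectorUnitary
    rw [Unitary.conjStarAlgAut_star_apply, Units.val_mul, conjTranspose_mul]
    simp only [mul_assoc]
    rfl
  have hM' : IsStarNormal (u⁻¹.val * M * u.val) := by
    have := IsStarNormal.map (Unitary.conjStarAlgAut ℂ _ (star U)) M
    rwa [Unitary.conjStarAlgAut_star_apply] at this
  have hadjoint : (u⁻¹.val * M * u.val)ᴴ = u⁻¹.val * Mᴴ * u.val := by
    have := map_star (Unitary.conjStarAlgAut ℂ _ (star U)) M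
    rw [Unitary.conjStarAlgAut_star_apply, Unitary.conjStarAlgAut_star_apply] at this
    exact this.symm
  have htrace : ((u⁻¹.val * M * u.val)ᴴ * (u⁻¹.val * M * u.val)).trace = (Mᴴ * M).trace := by
    rw [hadjoint, ← trace_units_conj' u (Mᴴ * M)]
    simp only [mul_assoc, Units.mul_inv_cancel_left]
  have hconj : (g * u).val * (u⁻¹.val * M * u.val) * (g * u)⁻¹.val = g.val * M * g⁻¹.val := by
    simp only [_root_.mul_inv_rev, Units.val_mul, mul_assoc, Units.mul_inv_cancel_left]
  rw [← htrace, ← hconj]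
  exact trace_conjTranspose_mul_self_le_conj_of_diagonal hM' hpos.eigenvalues_pos hdiag

end NormalMatrix

section Vectorize

/-- The coordinate isomorphism from tuples of matrices to a Euclidean space, turning the trace
pairing into the inner product. -/
noncomputable def vectorize (J N : Type*) :
    (J → Matrix N N ℂ) ≃ₗ[ℂ] EuclideanSpace ℂ (J × N × N) :=
  (LinearEquiv.piCongrRight fun _ ↦ (LinearEquiv.curry ℂ ℂ N N).symm) ≪≫ₗ
    (LinearEquiv.curry ℂ ℂ J (N × N)).symm ≪≫ₗ (WithLp.linearEquiv 2 ℂ _).symm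

variable {J N : Type*}

lemma vectorize_apply (X : J → Matrix N N ℂ) (j : J) (a b : N) :
    vectorize J N X (j, a, b) = X j a b := rfl

lemma continuous_vectorize : Continuous (vectorize J N) := by
  refine (PiLp.continuous_toLp 2 _).comp (continuous_pi fun i ↦ ?_)
  exact (continuous_apply_apply i.2.1 i.2.2).comp (continuous_apply i.1)

variable [Fintype J] [Fintype N]

lemma inner_vectorize (X Y : J → Matrix N N ℂ) :
    inner ℂ (vectorize J N X) (vectorize J N Y) = ∑ j, ((X j)ᴴ * Y j).trace := by
  simp only [PiLp.inner_apply, Fintype.sum_prod_type, vectorize_apply, trace, diag_apply,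
    Matrix.mul_apply, conjTranspose_apply, RCLike.inner_apply']
  exact Finset.sum_congr rfl fun j _ ↦ Finset.sum_comm

lemma norm_vectorize_sq (X : J → Matrix N N ℂ) :
    ‖vectorize J N X‖ ^ 2 = ∑ j, ((X j)ᴴ * X j).trace.re := by
  rw [← inner_self_eq_norm_sq (𝕜 := ℂ), inner_vectorize, RCLike.re_eq_complex_re, Complex.re_sum]

end Vectorize

section ConjRepresentation

variable {J N B : Type*} [Fintype N] [DecidableEq N]

/-- Simultaneous conjugation of tuples of matrices by the images of units, carried over to the
Euclidean space of `vectorize` so that it acts on an inner product space. -/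
noncomputable def conjRepresentation [Monoid B] (J : Type*) (φ : B →* Matrix N N ℂ) :
    Representation ℂ Bˣ (EuclideanSpace ℂ (J × N × N)) where
  toFun g := (vectorize J N).conj (LinearMap.pi fun j ↦
    LinearMap.mulLeftRight ℂ (φ g, φ g⁻¹.val) ∘ₗ LinearMap.proj j)
  map_one' := by
    rw [Module.End.one_eq_id, ← (vectorize J N).conj_id]
    congr 1
    ext X : 1
    funext j
    simp
  map_mul' g h := by
    rw [Module.End.mul_eq_comp, ← LinearEquiv.conj_comp]
    congr 1
    ext X : 1
    funext j
    simp [mul_assoc]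

lemma conjRepresentation_vectorize [Monoid B] (φ : B →* Matrix N N ℂ) (g : Bˣ)
    (X : J → Matrix N N ℂ) :
    conjRepresentation J φ g (vectorize J N X) =
      vectorize J N fun j ↦ φ g * X j * φ g⁻¹.val := by
  rw [conjRepresentation, MonoidHom.coe_mk, OneHom.coe_mk, LinearEquiv.conj_apply_apply,
    LinearEquiv.symm_apply_apply]
  rfl

lemma continuous_conjRepresentation_vectorize [Monoid B] [TopologicalSpace B]
    {φ : B →* Matrix N N ℂ} (hφ : Continuous φ) (X : J → Matrix N N ℂ) :
    Continuous fun g ↦ conjRepresentation J φ g (vectorize J N X) := by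
  simp only [conjRepresentation_vectorize]
  refine continuous_vectorize.comp (continuous_pi fun j ↦ ?_)
  exact ((hφ.comp Units.continuous_val).mul continuous_const).mul
    (hφ.comp Units.continuous_coe_inv)

variable [Fintype J]

lemma isStarRepresentation_conjRepresentation [Monoid B] [StarMul B]
    {φ : B →* Matrix N N ℂ} (hstar : ∀ b, φ (star b) = (φ b)ᴴ) :
    IsStarRepresentation (conjRepresentation J φ) := by
  intro g v w
  obtain ⟨X, rfl⟩ := (vectorize J N).surjective v
  obtain ⟨Y, rfl⟩ := (vectorize J N).surjective w
  simp only [conjRepresentation_vectorize, inner_vectorize]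
  refine Finset.sum_congr rfl fun j _ ↦ ?_
  calc ((φ g * X j * φ g⁻¹.val)ᴴ * Y j).trace
      = ((φ g⁻¹.val)ᴴ * ((X j)ᴴ * (φ g)ᴴ * Y j)).trace := by
        simp only [conjTranspose_mul, mul_assoc]
    _ = ((X j)ᴴ * ((φ g)ᴴ * Y j * (φ g⁻¹.val)ᴴ)).trace := by
        rw [trace_mul_comm]
        simp only [mul_assoc]
    _ = ((X j)ᴴ * (φ (star g).val * Y j * φ (star g)⁻¹.val)).trace := by
        rw [← star_inv, Units.coe_star, Units.coe_star, hstar, hstar]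

lemma norm_vectorize_le_norm_conjRepresentation [Monoid B] {M : J → Matrix N N ℂ}
    (hM : ∀ j, IsStarNormal (M j)) (φ : B →* Matrix N N ℂ) (g : Bˣ) :
    ‖vectorize J N M‖ ≤ ‖conjRepresentation J φ g (vectorize J N M)‖ := by
  refine (sq_le_sq₀ (norm_nonneg _) (norm_nonneg _)).mp ?_
  rw [conjRepresentation_vectorize, norm_vectorize_sq, norm_vectorize_sq]
  exact Finset.sum_le_sum fun j _ ↦
    trace_conjTranspose_mul_self_le_conj (hM j) (Units.map φ g)

end ConjRepresentation

theorem stmt_13_general {B J N : Type*} [CStarAlgebra B] [FiniteDimensional ℂ B] [Finite J]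
    [Fintype N] [DecidableEq N] (φ : B →* Matrix N N ℂ) (hφ : Continuous φ)
    (hstar : ∀ b, φ (star b) = (φ b)ᴴ) (M : J → Matrix N N ℂ) (hM : ∀ j, IsStarNormal (M j)) :
    IsClosed {X : J → Matrix N N ℂ | ∃ g : B, IsUnit g ∧ ∀ j, X j = φ g * M j * (φ g)⁻¹} := by
  have := Fintype.ofFinite J
  have hclosed := (isStarRepresentation_conjRepresentation (J := J) hstar).isClosed_orbit
    (continuous_conjRepresentation_vectorize hφ M)
    (norm_vectorize_le_norm_conjRepresentation hM φ)
  have hinv (g : Bˣ) : (φ g)⁻¹ = φ g⁻¹.val := (Matrix.coe_units_inv (Units.map φ g)).symm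
  convert hclosed.preimage continuous_vectorize using 1
  ext X
  constructor
  · rintro ⟨_, ⟨g, rfl⟩, hX⟩
    refine ⟨g, ?_⟩
    simp only [conjRepresentation_vectorize, ← hinv, ← hX]
  · rintro ⟨g, hg⟩
    simp only [conjRepresentation_vectorize, (vectorize J N).injective.eq_iff] at hg
    exact ⟨g, g.isUnit, fun j ↦ by rw [← hg, hinv]⟩

section Kron

variable {n : ℕ} {d : Fin n → ℕ}

lemma kron_mul (g h : ∀ i, Matrix (Fin (d i)) (Fin (d i)) ℂ) :
    kron (g * h) = kron g * kron h := by
  ext a b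
  simp only [kron, Pi.mul_apply, Matrix.mul_apply, ← Finset.prod_mul_distrib,
    Finset.prod_univ_sum, Fintype.piFinset_univ]

lemma kron_one : kron (1 : ∀ i, Matrix (Fin (d i)) (Fin (d i)) ℂ) = 1 := by
  ext a b
  simp only [kron, Pi.one_apply, Matrix.one_apply, Finset.prod_ite_zero, Finset.mem_univ,
    true_implies, Finset.prod_const_one, funext_iff]

lemma kron_star (g : ∀ i, Matrix (Fin (d i)) (Fin (d i)) ℂ) : kron (star g) = (kron g)ᴴ := by
  ext a b
  simp only [kron, Pi.star_apply, star_apply, conjTranspose_apply, star_prod]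

lemma continuous_kron : Continuous (kron (d := d)) := by
  unfold kron
  fun_prop

/-- The tensor product map of the local matrix algebras, as a monoid homomorphism. -/
noncomputable def kronHom (d : Fin n → ℕ) : (∀ i, Matrix (Fin (d i)) (Fin (d i)) ℂ) →*
    Matrix (∀ i, Fin (d i)) (∀ i, Fin (d i)) ℂ where
  toFun := kron
  map_one' := kron_one
  map_mul' := kron_mul

end Kron

/-- Every `m`-tuple of normal complex matrices in `End(V₁⊗⋯⊗Vₙ)^{⊕m}` has a
closed orbit under simultaneous conjugation by the local group `GL_d = GL(V₁)×⋯×GL(Vₙ)`. -/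
theorem stmt_13 {n m : ℕ} (d : Fin n → ℕ)
    (M : Fin m → Matrix (∀ i, Fin (d i)) (∀ i, Fin (d i)) ℂ)
    (hnormal : ∀ j, M j * (M j)ᴴ = (M j)ᴴ * M j) :
    IsClosed {X : Fin m → Matrix (∀ i, Fin (d i)) (∀ i, Fin (d i)) ℂ |
      ∃ g : ∀ i, Matrix (Fin (d i)) (Fin (d i)) ℂ, (∀ i, IsUnit (g i)) ∧
        ∀ j, X j = kron g * M j * (kron g)⁻¹} := by
  open scoped Matrix.Norms.L2Operator in
  simpa only [Pi.isUnit_iff] using! stmt_13_general (kronHom d) continuous_kron kron_star M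
    fun j ↦ ⟨(hnormal j).symm⟩
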